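/- Let p be a prime, R a nontrivial commutative ring and q ∈ R with (p)_q = 0 and R q-divisible. Let A = R[x], σ(x) = qx, ∂_σ(x^n) = (n)_q x^{n−1}, and let D = D_{A,σ} be the Ore extension. Then: (a) the multiplication of D extends to the set D̂ of formal series Σ_{k≥0} a_k∂^k with a_k ∈ R[x] (each coefficient of a product being a finite sum, because ∂_σ^l(a) = 0 for l > deg a), making D̂ an R-algebra containing D; (b) the set ẐD of formal series Σ_{k≥0} b_k∂^{pk} with all b_k ∈ R[x^p] is the center of D̂, and the set ẐA of formal series Σ_{k≥0} a_k∂^{pk} with a_k ∈ R[x] is a commutative subring of D̂ which is a ẐD-module free of rank p (with basis 1, x, …, x^{p−1}); (c) there exists an isomorphism of R-algebras from D̂ onto the endomorphism ring End_{ẐD}(ẐA) of the ẐD-module ẐA, under which each central element of ẐD corresponds to multiplication by itself. (Azumaya splitting of the completed ring of q-twisted differential operators over its center.) -/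

import Mathlib

/-!
Write `t = ∂^p` and identify `ẐA` with `R[x]⟦t⟧` and `ẐD` with the subring `R[x^p]⟦t⟧`; every element
of `D̂` is uniquely `Σ_{i<p} f_i ∂^i` with `f_i ∈ R[x]⟦t⟧` (`dcoef`, `asm`). The multiplication of `D̂` is
obtained by transport of structure from `End_{ẐD}(ẐA)`, along a bijection given by an action of `D̂`.

* Since `(p)_q = 0` and `p` is prime, `(m)_q` is a unit for `0 < m < p` (`qInt_isUnit`), and `q^p = 1`.
* The operator `D` satisfies `D^p = 0`, so it has to be deformed in order to let `∂^p` act as `t`: put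
  `∂' = D + x^{p-1} h σ` with `h ∈ ẐD`. It obeys the commutation rule `∂' a = σ(a) ∂' + D(a)`, hence
  `∂'^p` commutes with `x`, and `∂'^p(1) = h ∏_{0<m<p} ((m)_q + q^m x^p h)`. As the linear coefficient
  `∏ (m)_q` is a unit, there is a solution `h ∈ t·ẐD` of `∂'^p(1) = t` (`exists_twist`, `exists_del`).
* Letting `Σ f_i ∂^i` act as `Σ f_i ∂'^i` gives a map `theta : D̂ → End_{ẐD}(ẐA)`. In the basis
  `1, x, …, x^{p-1}` of `ẐA` over `ẐD` (`exists_basis`) it is given by the matrix `(∂'^i(x^j))`. Modulo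
  `t` this is `(D^i(x^j))`, triangular with diagonal entries the units `(j)_q!`; therefore it is
  invertible (`isUnit_matrix`) and `theta` is bijective (`theta_bijective`).
* The transported product extends that of the Ore extension because `∂'` satisfies the defining
  relations (`theta_omul`). The center of `D̂` is the center `ẐD` of the endomorphism ring of the free
  module `ẐA`.
-/

/-- The `q`-integer `(n)_q = 1 + q + ⋯ + q^{n-1}`. -/
def qInt {S : Type*} [CommRing S] (q : S) (n : ℕ) : S :=
  ∑ i ∈ Finset.range n, q ^ i

/-- The completed ring `D̂` is modelled by formal series `Σ_k a_k∂^k`, i.e. by the type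
`ℕ → R[x]`; `oneD` is its unit `∂^0`. -/
noncomputable def oneD (R : Type*) [CommRing R] : ℕ → Polynomial R :=
  fun k => if k = 0 then 1 else 0

/-- The element `x^r = x^r·∂^0` of `D̂`. -/
noncomputable def xpowD (R : Type*) [CommRing R] (r : ℕ) : ℕ → Polynomial R :=
  fun k => if k = 0 then Polynomial.X ^ r else 0

/-- `ẐD`: formal series `Σ_k b_k∂^{pk}` with all `b_k ∈ R[x^p]` (the center of `D̂`). -/
def ZDhat (R : Type*) [CommRing R] (p : ℕ) : Set (ℕ → Polynomial R) :=
  {f | (∀ k : ℕ, ¬ p ∣ k → f k = 0) ∧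
    ∀ k : ℕ, f k ∈ Algebra.adjoin R {(Polynomial.X : Polynomial R) ^ p}}

/-- `ẐA`: formal series `Σ_k a_k∂^{pk}` with `a_k ∈ R[x]` (the completed centralizer of
`A`). -/
def ZAhat (R : Type*) [CommRing R] (p : ℕ) : Set (ℕ → Polynomial R) :=
  {f | ∀ k : ℕ, ¬ p ∣ k → f k = 0}

/-- The ring `ẐA`, written as power series over `R[x]` in the variable `t = ∂^p`. -/
abbrev PS (R : Type*) [CommRing R] := PowerSeries (Polynomial R)

/-! ### `q`-integers -/

section QIntegers

variable {R : Type*} [CommRing R] (q : R)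

theorem qInt_add (a b : ℕ) : qInt q (a + b) = qInt q a + q ^ a * qInt q b := by
  simp [qInt, Finset.sum_range_add, Finset.mul_sum, pow_add]

theorem qInt_zero : qInt q 0 = 0 := by simp [qInt]

theorem qInt_one : qInt q 1 = 1 := by simp [qInt]

theorem q_pow_eq_one {p : ℕ} (hpq : qInt q p = 0) : q ^ p = 1 := by
  have h := geom_sum_mul q p
  rw [show ∑ i ∈ Finset.range p, q ^ i = qInt q p from rfl, hpq, zero_mul] at h
  exact (sub_eq_zero.mp h.symm)

theorem qInt_mul_eq_zero {n : ℕ} (h : qInt q n = 0) (k : ℕ) : qInt q (n * k) = 0 := by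
  induction k with
  | zero => simp [qInt]
  | succ k ih => rw [Nat.mul_succ, qInt_add, ih, h]; simp

/-- If `(m)_q` vanished together with `(p)_q`, then so would `(1)_q = 1`, because `m` is
invertible modulo `p`. -/
theorem qInt_isUnit [Nontrivial R] {p : ℕ} (hp : p.Prime) (hpq : qInt q p = 0)
    (hdiv : ∀ m : ℕ, 1 ≤ m → qInt q m ≠ 0 → IsUnit (qInt q m)) {m : ℕ} (h1 : 1 ≤ m)
    (hm : m < p) : IsUnit (qInt q m) := by
  refine hdiv m h1 fun h0 => ?_
  have hc : Nat.Coprime m p := (Nat.coprime_of_lt_prime (by omega) hm hp).symm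
  obtain ⟨k, -, hk⟩ := Nat.exists_mul_mod_eq_one_of_coprime hc hp.one_lt
  have e : m * k = p * (m * k / p) + 1 := by
    conv_lhs => rw [← Nat.div_add_mod (m * k) p, hk]
  have h2 := qInt_mul_eq_zero q h0 k
  rw [e, qInt_add, qInt_mul_eq_zero q hpq, pow_mul, q_pow_eq_one q hpq, qInt_one] at h2
  simp at h2

end QIntegers

/-! ### Solving equations in power series rings -/

section Fixed

/-- Fixed points of `u ↦ a + X·K(u)`: the iteration is `X`-adically contracting. -/
theorem exists_powerSeries_fixed {S : Type*} [CommRing S] (a : PowerSeries S)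
    (K : Polynomial (PowerSeries S)) :
    ∃ u : PowerSeries S, u = a + PowerSeries.X * K.eval u := by
  let w : ℕ → PowerSeries S := fun n => Nat.rec 0 (fun _ v => a + PowerSeries.X * K.eval v) n
  have hw : ∀ n, w (n + 1) = a + PowerSeries.X * K.eval (w n) := fun n => rfl
  have contr : ∀ (u v : PowerSeries S) (n : ℕ), PowerSeries.X ^ n ∣ u - v →
      PowerSeries.X ^ (n + 1) ∣
        (a + PowerSeries.X * K.eval u) - (a + PowerSeries.X * K.eval v) := by
    intro u v n h
    rw [add_sub_add_left_eq_sub, ← mul_sub, pow_succ']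
    exact mul_dvd_mul_left _ (h.trans (Polynomial.sub_dvd_eval_sub u v K))
  have hstep : ∀ n, PowerSeries.X ^ n ∣ w (n + 1) - w n := by
    intro n
    induction n with
    | zero => simp
    | succ n ih => rw [hw (n + 1), hw n]; exact contr _ _ _ ih
  have hfar : ∀ n k, PowerSeries.X ^ n ∣ w (n + k) - w n := by
    intro n k
    induction k with
    | zero => simp
    | succ k ih =>
      have h2 := (pow_dvd_pow (PowerSeries.X : PowerSeries S) (Nat.le_add_right n k)).trans
        (hstep (n + k))
      have := dvd_add h2 ih
      rwa [sub_add_sub_cancel] at this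
  let u : PowerSeries S := PowerSeries.mk fun n => PowerSeries.coeff n (w (n + 1))
  have hu : ∀ n, PowerSeries.X ^ n ∣ u - w n := by
    intro n
    rw [PowerSeries.X_pow_dvd_iff]
    intro m hm
    have h := hfar (m + 1) (n - (m + 1))
    rw [Nat.add_sub_cancel' hm, PowerSeries.X_pow_dvd_iff] at h
    have h' := h m (Nat.lt_succ_self m)
    rw [map_sub, sub_eq_zero] at h'
    simp [u, h']
  refine ⟨u, ?_⟩
  rw [← sub_eq_zero]
  ext n
  have h1 := hu (n + 1)
  have h2 := contr _ _ _ (hu n)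
  rw [← hw n] at h2
  have h3 := dvd_sub h1 h2
  rw [sub_sub_sub_cancel_right, PowerSeries.X_pow_dvd_iff] at h3
  simpa using h3 n (Nat.lt_succ_self n)

/-- The equation `u·P(z u) = 1` has a solution in `S⟦z⟧` as soon as `P(0)` is a unit. -/
theorem exists_mul_eval_eq_one {S : Type*} [CommRing S] (P : Polynomial S)
    (hP : IsUnit (P.coeff 0)) :
    ∃ u : PowerSeries S, u * Polynomial.aeval (PowerSeries.X * u) P = 1 := by
  obtain ⟨c, hc⟩ := hP
  let ci : PowerSeries S := PowerSeries.C (c⁻¹ : Sˣ).1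
  obtain ⟨u, hu⟩ := exists_powerSeries_fixed ci
    (- Polynomial.C ci * Polynomial.X ^ 2 *
      ((P.divX.map PowerSeries.C).comp (Polynomial.C PowerSeries.X * Polynomial.X)))
  refine ⟨u, ?_⟩
  have e1 : Polynomial.aeval (PowerSeries.X * u) P =
      PowerSeries.X * u * Polynomial.eval (PowerSeries.X * u) (P.divX.map PowerSeries.C) +
        PowerSeries.C c.1 := by
    conv_lhs => rw [← Polynomial.divX_mul_X_add P]
    rw [map_add, map_mul, Polynomial.aeval_X, Polynomial.aeval_C, Polynomial.eval_map,
      Polynomial.aeval_def, hc, mul_comm]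
    rfl
  have e2 : PowerSeries.C c.1 * ci = 1 := by simp [ci, ← map_mul]
  simp only [Polynomial.eval_mul, Polynomial.eval_neg, Polynomial.eval_C, Polynomial.eval_pow,
    Polynomial.eval_X, Polynomial.eval_comp] at hu
  rw [e1]
  generalize Polynomial.eval (PowerSeries.X * u) (P.divX.map PowerSeries.C) = E at hu ⊢
  linear_combination (PowerSeries.C c.1) * hu + (1 - PowerSeries.X * u ^ 2 * E) * e2

end Fixed

/-! ### The deformed derivation acting as the generator of the Ore extension -/

/-- The ring `ẐD`, written as the subring of `R[x]⟦t⟧` of series with coefficients in `R[x^p]`. -/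
def zs (R : Type*) [CommRing R] (p : ℕ) : Subalgebra R (PS R) where
  carrier := {f | ∀ k, PowerSeries.coeff k f ∈ Algebra.adjoin R {(Polynomial.X : Polynomial R) ^ p}}
  mul_mem' := by
    intro a b ha hb k
    rw [PowerSeries.coeff_mul]
    exact sum_mem fun x _ => mul_mem (ha _) (hb _)
  add_mem' := by
    intro a b ha hb k
    rw [map_add]
    exact add_mem (ha k) (hb k)
  algebraMap_mem' := by
    intro r k
    rw [PowerSeries.algebraMap_apply, PowerSeries.coeff_C]
    split_ifs
    · exact Subalgebra.algebraMap_mem _ r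
    · exact zero_mem _

theorem mem_zs {R : Type*} [CommRing R] {p : ℕ} {f : PS R} :
    f ∈ zs R p ↔ ∀ k, PowerSeries.coeff k f ∈
      Algebra.adjoin R {(Polynomial.X : Polynomial R) ^ p} := Iff.rfl

theorem C_mem_zs {R : Type*} [CommRing R] {p : ℕ} {a : Polynomial R}
    (ha : a ∈ Algebra.adjoin R {(Polynomial.X : Polynomial R) ^ p}) :
    (PowerSeries.C a : PS R) ∈ zs R p := by
  intro k
  rw [PowerSeries.coeff_C]
  split_ifs
  · exact ha
  · exact zero_mem _

section Derivation

variable {R : Type*} [CommRing R] {q : R}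
    {σ : Polynomial R →ₐ[R] Polynomial R}
    {D : Polynomial R →ₗ[R] Polynomial R}

theorem sigma_X_pow (hσ : σ Polynomial.X = Polynomial.C q * Polynomial.X) (n : ℕ) :
    σ (Polynomial.X ^ n) = q ^ n • Polynomial.X ^ n := by
  rw [map_pow, hσ, mul_pow, ← Polynomial.C_pow, Polynomial.smul_eq_C_mul]

theorem D_mul (hσ : σ Polynomial.X = Polynomial.C q * Polynomial.X)
    (hD : ∀ n : ℕ, D (Polynomial.X ^ n) = qInt q n • Polynomial.X ^ (n - 1))
    (a b : Polynomial R) : D (a * b) = D a * b + σ a * D b := by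
  induction a using Polynomial.induction_on' with
  | add a a' h h' => simp only [add_mul, map_add, h, h']; ring
  | monomial n r =>
    induction b using Polynomial.induction_on' with
    | add b b' h h' => simp only [mul_add, map_add, h, h']; ring
    | monomial m s =>
      have e1 : qInt q n • (Polynomial.X : Polynomial R) ^ (n + m - 1) =
          qInt q n • Polynomial.X ^ (n - 1 + m) := by
        rcases n with _ | n
        · simp [qInt_zero]
        · rw [show n + 1 + m - 1 = n + 1 - 1 + m by omega]
      have e2 : qInt q m • (Polynomial.X : Polynomial R) ^ (n + m - 1) =
          qInt q m • Polynomial.X ^ (n + (m - 1)) := by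
        rcases m with _ | m
        · simp [qInt_zero]
        · rw [show n + (m + 1) - 1 = n + (m + 1 - 1) by omega]
      simp only [← Polynomial.smul_X_eq_monomial, map_smul, smul_mul_assoc, mul_smul_comm,
        ← pow_add, hD, sigma_X_pow hσ, qInt_add, add_smul, mul_smul, e1, e2]
      module

theorem D_C (hD : ∀ n : ℕ, D (Polynomial.X ^ n) = qInt q n • Polynomial.X ^ (n - 1)) (r : R) :
    D (Polynomial.C r) = 0 := by
  have := hD 0
  rw [pow_zero, qInt_zero, zero_smul] at this
  rw [← mul_one (Polynomial.C r), ← Polynomial.smul_eq_C_mul, map_smul, this, smul_zero]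

/-- Elements of `R[x^p]` are constants for both `σ` and `D`; this makes `∂'` linear over `ẐD`. -/
theorem center_invariants {p : ℕ} (hpq : qInt q p = 0)
    (hσ : σ Polynomial.X = Polynomial.C q * Polynomial.X)
    (hD : ∀ n : ℕ, D (Polynomial.X ^ n) = qInt q n • Polynomial.X ^ (n - 1))
    {a : Polynomial R} (ha : a ∈ Algebra.adjoin R {(Polynomial.X : Polynomial R) ^ p}) :
    σ a = a ∧ D a = 0 := by
  induction ha using Algebra.adjoin_induction with
  | mem x hx =>
    rw [Set.mem_singleton_iff] at hx
    subst hx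
    rw [sigma_X_pow hσ, hD, hpq, q_pow_eq_one q hpq]
    simp
  | algebraMap r => exact ⟨σ.commutes r, D_C hD r⟩
  | add x y _ _ hx hy => simp [hx, hy]
  | mul x y _ _ hx hy => simp [hx, hy, D_mul hσ hD]

/-- The coefficientwise extension of `D` to `R[x]⟦t⟧`. -/
noncomputable def coefD (D : Polynomial R →ₗ[R] Polynomial R) (f : PS R) : PS R :=
  PowerSeries.mk fun k => D (PowerSeries.coeff k f)

theorem coefD_add (f g : PS R) : coefD D (f + g) = coefD D f + coefD D g := by
  ext1 n; simp [coefD]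

theorem coefD_C (b : Polynomial R) : coefD D (PowerSeries.C b) = PowerSeries.C (D b) := by
  ext1 n
  simp only [coefD, PowerSeries.coeff_mk, PowerSeries.coeff_C]
  split_ifs <;> simp

theorem coefD_mul (hσ : σ Polynomial.X = Polynomial.C q * Polynomial.X)
    (hD : ∀ n : ℕ, D (Polynomial.X ^ n) = qInt q n • Polynomial.X ^ (n - 1)) (f g : PS R) :
    coefD D (f * g) = coefD D f * g + PowerSeries.map (σ : Polynomial R →+* Polynomial R) f *
      coefD D g := by
  ext1 n
  simp only [coefD, PowerSeries.coeff_mk, map_add, PowerSeries.coeff_mul, map_sum,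
    D_mul hσ hD, Finset.sum_add_distrib, PowerSeries.coeff_map]
  rfl

/-- The twist `h ∈ ẐD`, divisible by `t`. For `∂' = D + x^{p-1} h σ` one has `∂'(1) = h x^{p-1}` and
`∂'(x^m) = ((m)_q + q^m x^p h) x^{m-1}`, so the displayed equation says `∂'^p(1) = t`. It is solved
by `h = t·u(x^p t)` with `u ∈ R⟦z⟧` such that `u·∏_m ((m)_q + q^m z u) = 1`. -/
theorem exists_twist [Nontrivial R] {p : ℕ} (hp : p.Prime) (hpq : qInt q p = 0)
    (hdiv : ∀ m : ℕ, 1 ≤ m → qInt q m ≠ 0 → IsUnit (qInt q m)) :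
    ∃ h : PS R, h ∈ zs R p ∧ PowerSeries.constantCoeff h = 0 ∧
      h * ∏ m ∈ Finset.range (p - 1), (algebraMap R (PS R) (qInt q (m + 1)) +
        algebraMap R (PS R) (q ^ (m + 1)) * PowerSeries.C (Polynomial.X ^ p) * h) =
        PowerSeries.X := by
  obtain ⟨u, hu⟩ := exists_mul_eval_eq_one (∏ m ∈ Finset.range (p - 1),
    (Polynomial.C (qInt q (m + 1)) + Polynomial.C (q ^ (m + 1)) * Polynomial.X)) (by
      rw [Polynomial.coeff_zero_prod]
      simp only [Polynomial.coeff_add, Polynomial.coeff_C_zero, Polynomial.mul_coeff_zero,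
        Polynomial.coeff_X_zero, mul_zero, add_zero]
      rw [IsUnit.prod_iff]
      intro m hm
      rw [Finset.mem_range] at hm
      exact qInt_isUnit q hp hpq hdiv (by omega) (by omega))
  -- the ring homomorphism `R⟦z⟧ → R[x]⟦t⟧`, `z ↦ x^p t`
  let ψ : PowerSeries R →+* PS R :=
    (PowerSeries.rescale ((Polynomial.X : Polynomial R) ^ p)).comp
      (PowerSeries.map (Polynomial.C : R →+* Polynomial R))
  have hψX : ψ PowerSeries.X = PowerSeries.C (Polynomial.X ^ p) * PowerSeries.X := by
    simp [ψ, PowerSeries.rescale_X]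
  have hψC : ∀ r, ψ (algebraMap R _ r) = algebraMap R (PS R) r := by
    intro r
    ext1 n
    simp only [ψ, RingHom.comp_apply, PowerSeries.algebraMap_apply, PowerSeries.map_C,
      PowerSeries.coeff_rescale, PowerSeries.coeff_C]
    split_ifs with h
    · simp [h]
    · simp
  refine ⟨PowerSeries.X * ψ u, ?_, by simp, ?_⟩
  · intro k
    rcases k with _ | k
    · simp
    · rw [PowerSeries.coeff_succ_X_mul]
      simp only [ψ, RingHom.comp_apply, PowerSeries.coeff_rescale, PowerSeries.coeff_map]
      exact mul_mem (pow_mem (Algebra.self_mem_adjoin_singleton R _) _)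
        (Subalgebra.algebraMap_mem _ _)
  · have h2 := congrArg ψ hu
    simp only [map_mul, map_prod, map_add, map_one, Polynomial.aeval_C, Polynomial.aeval_X, hψC,
      hψX] at h2
    rw [mul_assoc PowerSeries.X]
    refine Eq.trans (congrArg _ (Eq.trans (congrArg _ ?_) h2)) (mul_one _)
    refine Finset.prod_congr rfl fun m _ => ?_
    ring

/-- The operator `∂' = D + x^{p-1} h σ` on `R[x]⟦t⟧`: it is `ẐD`-linear, satisfies the commutation
rule of the Ore extension and `∂'^p = t`, and it reduces to `D` modulo `t`. -/
theorem exists_del [Nontrivial R] {p : ℕ} (hp : p.Prime) (hpq : qInt q p = 0)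
    (hdiv : ∀ m : ℕ, 1 ≤ m → qInt q m ≠ 0 → IsUnit (qInt q m))
    (hσ : σ Polynomial.X = Polynomial.C q * Polynomial.X)
    (hD : ∀ n : ℕ, D (Polynomial.X ^ n) = qInt q n • Polynomial.X ^ (n - 1))
    (hspan : ∀ m : PS R, ∃ c : Fin p → zs R p,
      m = ∑ r : Fin p, c r • PowerSeries.C (Polynomial.X ^ (r : ℕ))) :
    ∃ del : Module.End (zs R p) (PS R),
      (∀ b m, del (PowerSeries.C b * m) =
        PowerSeries.C (σ b) * del m + PowerSeries.C (D b) * m) ∧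
      (∀ m, (del ^ p) m = PowerSeries.X * m) ∧
      (∀ m, PowerSeries.constantCoeff (del m) = D (PowerSeries.constantCoeff m)) := by
  obtain ⟨h, hz, h0, hprod⟩ := exists_twist hp hpq hdiv
  let s : PS R →+* PS R := PowerSeries.map (σ : Polynomial R →+* Polynomial R)
  let g : PS R := PowerSeries.C (Polynomial.X ^ (p - 1)) * h
  have hzs : ∀ z ∈ zs R p, s z = z ∧ coefD D z = 0 := by
    intro z hz
    constructor <;> ext1 k
    · simpa [s] using (center_invariants hpq hσ hD (hz k)).1
    · simpa [coefD] using (center_invariants hpq hσ hD (hz k)).2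
  have hrule : ∀ f m : PS R, coefD D (f * m) + g * s (f * m) =
      s f * (coefD D m + g * s m) + coefD D f * m := by
    intro f m
    rw [coefD_mul hσ hD, map_mul]
    ring
  let del : Module.End (zs R p) (PS R) :=
    { toFun := fun m => coefD D m + g * s m
      map_add' := by intro a b; simp only [coefD_add, map_add]; ring
      map_smul' := by
        rintro ⟨z, hz⟩ m
        simp only [RingHom.id_apply]
        change coefD D (z * m) + g * s (z * m) = z * (coefD D m + g * s m)
        rw [hrule, (hzs z hz).1, (hzs z hz).2, zero_mul, add_zero] }
  have hdel : ∀ m, del m = coefD D m + g * s m := fun m => rfl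
  have hcomm : ∀ b m, del (PowerSeries.C b * m) =
        PowerSeries.C (σ b) * del m + PowerSeries.C (D b) * m := by
    intro b m
    have hs : s (PowerSeries.C b) = PowerSeries.C (σ b) := by simp [s]
    rw [hdel, hrule, coefD_C, hs, ← hdel]
  have hlin : ∀ (E : Module.End (zs R p) (PS R)) (z m : PS R), z ∈ zs R p →
      E (z * m) = z * E m := fun E z m hz => E.map_smul (⟨z, hz⟩ : zs R p) m
  have hsmulC : ∀ (r : R) (a : Polynomial R), PowerSeries.C (r • a) =
      algebraMap R (PS R) r * PowerSeries.C a := by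
    intro r a
    rw [PowerSeries.algebraMap_apply, ← map_mul, Algebra.smul_def]
  -- `∂'^k x = q^k x ∂'^k + (k)_q ∂'^{k-1}`
  have hX : ∀ k m, (del ^ (k + 1)) (PowerSeries.C Polynomial.X * m) =
      algebraMap R (PS R) (q ^ (k + 1)) * PowerSeries.C Polynomial.X * (del ^ (k + 1)) m +
      algebraMap R (PS R) (qInt q (k + 1)) * (del ^ k) m := by
    intro k
    have hσX : PowerSeries.C (σ Polynomial.X) =
        algebraMap R (PS R) q * PowerSeries.C Polynomial.X := by
      rw [hσ, ← hsmulC, Polynomial.smul_eq_C_mul]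
    have hDX : D Polynomial.X = 1 := by
      have := hD 1
      rw [pow_one, qInt_one, one_smul, Nat.sub_self, pow_zero] at this
      exact this
    induction k with
    | zero =>
      intro m
      simp only [zero_add, pow_one, qInt_one, pow_zero, map_one, one_mul, Module.End.one_apply,
        hcomm, hσX, hDX]
    | succ k ih =>
      intro m
      rw [pow_succ' del (k + 1), Module.End.mul_apply, ih, map_add, mul_assoc,
        hlin del _ _ (Subalgebra.algebraMap_mem _ _), hlin del _ _ (Subalgebra.algebraMap_mem _ _),
        hcomm, hσX, hDX, map_one, one_mul, Module.End.mul_apply,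
        qInt_add q (k + 1) 1, qInt_one, pow_succ' del k, Module.End.mul_apply]
      simp only [map_add, map_pow, mul_one]
      ring
  have hXp : ∀ m, (del ^ p) (PowerSeries.C Polynomial.X * m) =
      PowerSeries.C Polynomial.X * (del ^ p) m := by
    intro m
    have := hX (p - 1) m
    rw [Nat.sub_add_cancel hp.one_le, hpq, q_pow_eq_one q hpq] at this
    simpa using this
  have hXpn : ∀ n, (del ^ p) (PowerSeries.C (Polynomial.X ^ n)) =
      PowerSeries.C (Polynomial.X ^ n) * (del ^ p) 1 := by
    intro n
    induction n with
    | zero => simp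
    | succ n ih => rw [pow_succ', map_mul, hXp, ih, mul_assoc]
  -- `∂'` lowers the powers of `x`, with coefficients in `ẐD`
  have hlow : ∀ n, del (PowerSeries.C (Polynomial.X ^ (n + 1))) =
      (algebraMap R (PS R) (qInt q (n + 1)) +
        algebraMap R (PS R) (q ^ (n + 1)) * PowerSeries.C (Polynomial.X ^ p) * h) *
        PowerSeries.C (Polynomial.X ^ n) := by
    intro n
    have hs : s (PowerSeries.C (Polynomial.X ^ (n + 1))) =
        algebraMap R (PS R) (q ^ (n + 1)) * PowerSeries.C (Polynomial.X ^ (n + 1)) := by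
      rw [← hsmulC, ← sigma_X_pow hσ]
      simp [s]
    have hXX : PowerSeries.C (Polynomial.X ^ (p - 1)) * PowerSeries.C (Polynomial.X ^ (n + 1)) =
        PowerSeries.C ((Polynomial.X : Polynomial R) ^ p) *
          PowerSeries.C (Polynomial.X ^ n) := by
      rw [← map_mul, ← map_mul, ← pow_add, ← pow_add]
      congr 2
      have := hp.one_le
      omega
    rw [hdel, coefD_C, hD, hs, hsmulC, Nat.add_sub_cancel]
    simp only [g]
    linear_combination (algebraMap R (PS R) (q ^ (n + 1)) * h) * hXX
  have hcz : ∀ n, (algebraMap R (PS R) (qInt q (n + 1)) +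
        algebraMap R (PS R) (q ^ (n + 1)) * PowerSeries.C (Polynomial.X ^ p) * h) ∈ zs R p :=
    fun n => add_mem (Subalgebra.algebraMap_mem _ _) (mul_mem (mul_mem
      (Subalgebra.algebraMap_mem _ _) (C_mem_zs (Algebra.self_mem_adjoin_singleton R _))) hz)
  have hdown : ∀ n, (del ^ n) (PowerSeries.C (Polynomial.X ^ n)) =
      ∏ m ∈ Finset.range n, (algebraMap R (PS R) (qInt q (m + 1)) +
        algebraMap R (PS R) (q ^ (m + 1)) * PowerSeries.C (Polynomial.X ^ p) * h) := by
    intro n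
    induction n with
    | zero => simp
    | succ n ih =>
      rw [pow_succ, Module.End.mul_apply, hlow, hlin _ _ _ (hcz n), ih, Finset.prod_range_succ,
        mul_comm]
  have hone : (del ^ p) 1 = PowerSeries.X := by
    have h1 : del 1 = h * PowerSeries.C (Polynomial.X ^ (p - 1)) := by
      have h11 : coefD D 1 = 0 := (hzs 1 (one_mem _)).2
      rw [hdel, h11, map_one, zero_add, mul_one, mul_comm]
    calc (del ^ p) 1 = (del ^ (p - 1)) (del 1) := by
          rw [← Module.End.mul_apply, ← pow_succ, Nat.sub_add_cancel hp.one_le]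
      _ = _ := by rw [h1, hlin _ _ _ hz, hdown, hprod]
  refine ⟨del, hcomm, ?_, ?_⟩
  · intro m
    obtain ⟨c, rfl⟩ := hspan m
    simp only [map_sum, map_smul, hXpn, hone, Finset.mul_sum]
    refine Finset.sum_congr rfl fun r _ => ?_
    rw [mul_comm PowerSeries.X, smul_mul_assoc]
  · intro m
    rw [hdel, map_add, map_mul]
    simp only [g, map_mul, h0, mul_zero, zero_mul, add_zero]
    simp only [coefD, ← PowerSeries.coeff_zero_eq_constantCoeff_apply, PowerSeries.coeff_mk]

end Derivation

/-! ### Freeness of `ẐA` over `ẐD` -/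

section Free

variable {R : Type*} [CommRing R]

theorem coeff_of_mem_adjoin {p : ℕ} (hp : 0 < p) {a : Polynomial R}
    (ha : a ∈ Algebra.adjoin R {(Polynomial.X : Polynomial R) ^ p}) {n : ℕ} (hn : ¬ p ∣ n) :
    a.coeff n = 0 := by
  rw [Algebra.adjoin_singleton_eq_range_aeval] at ha
  obtain ⟨b, rfl⟩ := ha
  have : Polynomial.aeval (Polynomial.X ^ p) b = Polynomial.expand R p b := rfl
  change (Polynomial.aeval (Polynomial.X ^ p) b).coeff n = 0
  rw [this, Polynomial.coeff_expand hp, if_neg hn]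

/-- Reading off the coefficients of `Σ_{r<p} b_r x^r` with `b_r ∈ R[x^p]`. -/
theorem coeff_sum_mul_X_pow {p : ℕ} (hp : 0 < p) (b : Fin p → Polynomial R)
    (hb : ∀ r, b r ∈ Algebra.adjoin R {(Polynomial.X : Polynomial R) ^ p}) (k : ℕ) (r : Fin p) :
    (∑ i : Fin p, b i * Polynomial.X ^ (i : ℕ)).coeff (p * k + r) = (b r).coeff (p * k) := by
  rw [Polynomial.finsetSum_coeff, Finset.sum_eq_single r]
  · rw [Polynomial.coeff_mul_X_pow]
  · intro i _ hi
    rw [Polynomial.coeff_mul_X_pow']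
    split_ifs with h
    · refine coeff_of_mem_adjoin hp (hb i) fun hd => hi ?_
      have h1 : p * k + (r : ℕ) ≡ i [MOD p] := ((Nat.modEq_iff_dvd' h).mpr hd).symm
      have h2 : (r : ℕ) ≡ i [MOD p] := by
        have h3 : p * k + (r : ℕ) ≡ r [MOD p] := by simp [Nat.ModEq]
        exact h3.symm.trans h1
      exact Fin.ext (Nat.ModEq.eq_of_lt_of_lt h2 r.2 i.2).symm
    · rfl
  · simp

/-- The component of `a` in `R[x^p]·x^r`, divided by `x^r`. -/
noncomputable def comp_poly (p r : ℕ) (a : Polynomial R) : Polynomial R :=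
  Polynomial.expand R p (Polynomial.contract p (Polynomial.divX^[r] a))

theorem comp_poly_mem (p r : ℕ) (a : Polynomial R) :
    comp_poly p r a ∈ Algebra.adjoin R {(Polynomial.X : Polynomial R) ^ p} := by
  rw [Algebra.adjoin_singleton_eq_range_aeval]
  exact ⟨_, rfl⟩

theorem comp_poly_coeff {p : ℕ} (hp : 0 < p) (r k : ℕ) (a : Polynomial R) :
    (comp_poly p r a).coeff (p * k) = a.coeff (p * k + r) := by
  have h : ∀ (r n : ℕ) (a : Polynomial R), (Polynomial.divX^[r] a).coeff n = a.coeff (n + r) := by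
    intro r
    induction r with
    | zero => simp
    | succ r ih =>
      intro n a
      rw [Function.iterate_succ_apply, ih, Polynomial.coeff_divX, add_assoc]
  rw [comp_poly, mul_comm, Polynomial.coeff_expand_mul hp, Polynomial.coeff_contract hp.ne', h]

theorem eq_sum_comp_poly {p : ℕ} (hp : 0 < p) (a : Polynomial R) :
    a = ∑ r : Fin p, comp_poly p r a * Polynomial.X ^ (r : ℕ) := by
  ext n
  have h := coeff_sum_mul_X_pow hp (fun r : Fin p => comp_poly p r a)
    (fun r => comp_poly_mem p r a) (n / p) ⟨n % p, Nat.mod_lt n hp⟩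
  rw [comp_poly_coeff hp] at h
  simp only [Nat.div_add_mod] at h
  exact h.symm

theorem zs_span {p : ℕ} (hp : 0 < p) (m : PS R) : ∃ c : Fin p → zs R p,
      m = ∑ r : Fin p, c r • PowerSeries.C (Polynomial.X ^ (r : ℕ)) := by
  refine ⟨fun r => ⟨PowerSeries.mk fun k => comp_poly p r (PowerSeries.coeff k m), fun k => ?_⟩, ?_⟩
  · rw [PowerSeries.coeff_mk]
    exact comp_poly_mem _ _ _
  · ext1 k
    rw [map_sum]
    conv_lhs => rw [eq_sum_comp_poly hp (PowerSeries.coeff k m)]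
    refine Finset.sum_congr rfl fun r _ => ?_
    rw [Subalgebra.smul_def, smul_eq_mul, PowerSeries.coeff_mul_C, PowerSeries.coeff_mk]

/-- The `ẐD`-basis `1, x, …, x^{p-1}` of `ẐA`. -/
theorem exists_basis {p : ℕ} (hp : 0 < p) : ∃ b : Module.Basis (Fin p) (zs R p) (PS R),
    ∀ r : Fin p, b r = PowerSeries.C (Polynomial.X ^ (r : ℕ)) := by
  have hli : LinearIndependent (zs R p)
      (fun r : Fin p => (PowerSeries.C (Polynomial.X ^ (r : ℕ)) : PS R)) := by
    rw [Fintype.linearIndependent_iff]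
    intro g hg r
    ext k n
    have h1 := congrArg (PowerSeries.coeff k) hg
    simp only [map_sum, Subalgebra.smul_def, smul_eq_mul, PowerSeries.coeff_mul_C, map_zero] at h1
    have h2 := coeff_sum_mul_X_pow hp (fun i => PowerSeries.coeff k (g i).1)
      (fun i => (g i).2 k) (n / p) r
    rw [h1] at h2
    by_cases hn : p ∣ n
    · rw [Nat.mul_div_cancel' hn] at h2
      simpa using h2.symm
    · simpa using coeff_of_mem_adjoin hp ((g r).2 k) hn
  refine ⟨Module.Basis.mk hli ?_, fun r => by simp⟩
  intro m _
  obtain ⟨c, rfl⟩ := zs_span hp m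
  exact sum_mem fun r _ => Submodule.smul_mem _ _ (Submodule.subset_span ⟨r, rfl⟩)

end Free

/-! ### The action of `D̂` on `ẐA` -/

section Theta

variable {R : Type*} [CommRing R]

/-- The coefficient `Σ_k v_{pk+i} t^k ∈ R[x]⟦t⟧` of `∂^i` in `v = Σ_k v_k ∂^k`, where `t = ∂^p`. -/
noncomputable def dcoef (p i : ℕ) (v : ℕ → Polynomial R) : PS R :=
  PowerSeries.mk fun k => v (p * k + i)

/-- The series `Σ_{i<p} m_i ∂^i` in `D̂`, with `t = ∂^p`; the values `m_i` with `i ≥ p` are ignored. -/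
noncomputable def asm (p : ℕ) (m : ℕ → PS R) : ℕ → Polynomial R :=
  fun n => PowerSeries.coeff (n / p) (m (n % p))

/-- The inclusion of `R[x]⟦t⟧` into `D̂` with image `ẐA`. -/
noncomputable def inc (p : ℕ) (m : PS R) : ℕ → Polynomial R :=
  asm p fun i => if i = 0 then m else 0

theorem dcoef_asm {p : ℕ} {i : ℕ} (hi : i < p) (m : ℕ → PS R) : dcoef p i (asm p m) = m i := by
  ext1 k
  have hp : 0 < p := by omega
  simp only [dcoef, asm, PowerSeries.coeff_mk]
  rw [Nat.mul_add_mod, Nat.mod_eq_of_lt hi, Nat.mul_add_div hp, Nat.div_eq_of_lt hi, add_zero]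

theorem asm_dcoef (p : ℕ) (v : ℕ → Polynomial R) : asm p (fun i => dcoef p i v) = v := by
  funext n
  simp [dcoef, asm, Nat.div_add_mod]

theorem asm_congr {p : ℕ} (hp : 0 < p) {m m' : ℕ → PS R} (h : ∀ i < p, m i = m' i) :
    asm p m = asm p m' := by
  funext n
  simp only [asm, h _ (Nat.mod_lt n hp)]

theorem ext_dcoef {p : ℕ} (hp : 0 < p) {v w : ℕ → Polynomial R}
    (h : ∀ i < p, dcoef p i v = dcoef p i w) : v = w := by
  rw [← asm_dcoef p v, ← asm_dcoef p w, asm_congr hp h]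

theorem dcoef_inc {p : ℕ} {i : ℕ} (hi : i < p) (m : PS R) :
    dcoef p i (inc p m) = if i = 0 then m else 0 := dcoef_asm hi _

theorem inc_mem {p : ℕ} (m : PS R) : inc p m ∈ ZAhat R p := by
  intro k hk
  rw [Nat.dvd_iff_mod_eq_zero] at hk
  simp [inc, asm, hk]

theorem inc_dcoef {p : ℕ} {v : ℕ → Polynomial R} (hv : v ∈ ZAhat R p) :
    inc p (dcoef p 0 v) = v := by
  funext n
  by_cases h : p ∣ n
  · simp [inc, asm, dcoef, Nat.mod_eq_zero_of_dvd h, Nat.mul_div_cancel' h]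
  · rw [hv n h, inc_mem _ n h]

theorem inc_mem_ZDhat {p : ℕ} (hp : 0 < p) {m : PS R} : inc p m ∈ ZDhat R p ↔ m ∈ zs R p := by
  constructor
  · rintro ⟨-, h⟩ k
    have := h (p * k)
    simpa [inc, asm, hp] using this
  · intro h
    refine ⟨inc_mem m, fun k => ?_⟩
    by_cases hk : k % p = 0
    · simp only [inc, asm, hk, if_true]
      exact h _
    · simp [inc, asm, hk]

theorem xpowD_eq (p : ℕ) (r : ℕ) :
    xpowD R r = inc p (PowerSeries.C (Polynomial.X ^ r)) := by
  funext n
  simp only [xpowD, inc, asm]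
  by_cases hn : n = 0
  · simp [hn]
  · rw [if_neg hn]
    split_ifs with h
    · rw [PowerSeries.coeff_C, if_neg]
      intro h0
      have := Nat.div_add_mod n p
      rw [h, h0] at this
      exact hn (by simpa using this.symm)
    · simp

theorem oneD_eq (p : ℕ) : oneD R = inc p (1 : PS R) := by
  have h : oneD R = xpowD R 0 := by
    funext n
    simp [xpowD, oneD]
  rw [h, xpowD_eq p, pow_zero, map_one]

theorem inc_add (p : ℕ) (a b : PS R) : inc p (a + b) = inc p a + inc p b := by
  funext n
  simp only [inc, asm, Pi.add_apply]
  split_ifs <;> simp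

theorem inc_sum (p : ℕ) {ι : Type*} (s : Finset ι) (a : ι → PS R) :
    inc p (∑ i ∈ s, a i) = ∑ i ∈ s, inc p (a i) :=
  map_sum (AddMonoidHom.mk' (inc p) (inc_add p)) a s

theorem dcoef_single {p : ℕ} {i : ℕ} (hi : i < p) (k : ℕ) (a : Polynomial R) :
    dcoef p i (Finsupp.single k a) =
      if i = k % p then PowerSeries.C a * PowerSeries.X ^ (k / p) else 0 := by
  ext1 n
  have hp : 0 < p := by omega
  rw [dcoef, PowerSeries.coeff_mk, Finsupp.single_apply]
  split_ifs with h1 h2 h2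
  · rw [PowerSeries.coeff_C_mul_X_pow, if_pos]
    rw [h1, Nat.mul_add_div hp, Nat.div_eq_of_lt hi, add_zero]
  · exact absurd (by rw [h1, Nat.mul_add_mod, Nat.mod_eq_of_lt hi]) h2
  · rw [PowerSeries.coeff_C_mul_X_pow, if_neg]
    rintro rfl
    exact h1 (by rw [h2, Nat.div_add_mod])
  · simp

/-- The action of `D̂` on `R[x]⟦t⟧` in which `∂` acts by `del` and `R[x]⟦t⟧` by multiplication. -/
noncomputable def theta (p : ℕ) (del : Module.End (zs R p) (PS R)) :
    (ℕ → Polynomial R) →ₗ[R] Module.End (zs R p) (PS R) where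
  toFun f := ∑ i ∈ Finset.range p, Algebra.lmul (zs R p) (PS R) (dcoef p i f) * del ^ i
  map_add' f g := by
    rw [← Finset.sum_add_distrib]
    refine Finset.sum_congr rfl fun i _ => ?_
    rw [← add_mul, ← map_add]
    congr 2
  map_smul' r f := by
    rw [RingHom.id_apply, Finset.smul_sum]
    refine Finset.sum_congr rfl fun i _ => ?_
    ext1 m
    have h : dcoef p i (r • f) = r • dcoef p i f := by ext1 k; simp [dcoef]
    simp [h]

theorem theta_apply (p : ℕ) (del : Module.End (zs R p) (PS R)) (f : ℕ → Polynomial R) (m : PS R) :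
    theta p del f m = ∑ i ∈ Finset.range p, dcoef p i f * (del ^ i) m := by
  simp [theta, LinearMap.sum_apply]

theorem theta_inc {p : ℕ} (hp : 0 < p) (del : Module.End (zs R p) (PS R)) (a m : PS R) :
    theta p del (inc p a) m = a * m := by
  rw [theta_apply, Finset.sum_eq_single_of_mem 0 (Finset.mem_range.mpr hp)]
  · simp [dcoef_inc hp]
  · intro i hi h0
    rw [dcoef_inc (Finset.mem_range.mp hi), if_neg h0, zero_mul]

theorem theta_single {p : ℕ} (hp : 0 < p) {del : Module.End (zs R p) (PS R)}
    (hdel : ∀ m, (del ^ p) m = PowerSeries.X * m) (k : ℕ) (a : Polynomial R) (m : PS R) :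
    theta p del (Finsupp.single k a) m = PowerSeries.C a * (del ^ k) m := by
  have hpow : ∀ j (m : PS R), ((del ^ p) ^ j) m = PowerSeries.X ^ j * m := by
    intro j
    induction j with
    | zero => simp
    | succ j ih => intro m; rw [pow_succ, Module.End.mul_apply, hdel, ih, pow_succ, mul_assoc]
  have hk : (del ^ k) m = PowerSeries.X ^ (k / p) * (del ^ (k % p)) m := by
    conv_lhs => rw [← Nat.div_add_mod k p, pow_add, pow_mul, Module.End.mul_apply, hpow]
  rw [theta_apply, Finset.sum_eq_single_of_mem (k % p) (Finset.mem_range.mpr (Nat.mod_lt k hp))]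
  · rw [dcoef_single (Nat.mod_lt k hp), if_pos rfl, hk, mul_assoc]
  · intro i hi h0
    rw [dcoef_single (Finset.mem_range.mp hi), if_neg h0, zero_mul]

end Theta

/-! ### The action identifies `D̂` with the endomorphism ring -/

section Bijective

variable {R : Type*} [CommRing R] {q : R} {D : Polynomial R →ₗ[R] Polynomial R}

theorem D_iterate_of_lt (hD : ∀ n : ℕ, D (Polynomial.X ^ n) = qInt q n • Polynomial.X ^ (n - 1))
    (i : ℕ) : ∀ j, j < i → (D ^ i) (Polynomial.X ^ j) = 0 := by
  induction i with
  | zero => intro j hj; omega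
  | succ i ih =>
    intro j hj
    rw [pow_succ, Module.End.mul_apply, hD, map_smul]
    rcases j with _ | j
    · rw [qInt_zero, zero_smul]
    · rw [Nat.add_sub_cancel, ih j (by omega), smul_zero]

theorem D_iterate_self (hD : ∀ n : ℕ, D (Polynomial.X ^ n) = qInt q n • Polynomial.X ^ (n - 1))
    (i : ℕ) : (D ^ i) (Polynomial.X ^ i) =
      Polynomial.C (∏ m ∈ Finset.range i, qInt q (m + 1)) := by
  induction i with
  | zero => simp
  | succ i ih =>
    rw [pow_succ, Module.End.mul_apply, hD, map_smul, Nat.add_sub_cancel, ih,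
      Finset.prod_range_succ, Polynomial.smul_C, smul_eq_mul, mul_comm]

/-- The matrix `(∂'^i(x^j))` expresses `theta` in the basis `1, x, …, x^{p-1}`. Modulo `t` it is
triangular with the units `(j)_q!` on the diagonal, so it is invertible over `R[x]⟦t⟧`. -/
theorem isUnit_matrix [Nontrivial R] {p : ℕ} (hp : p.Prime) (hpq : qInt q p = 0)
    (hdiv : ∀ m : ℕ, 1 ≤ m → qInt q m ≠ 0 → IsUnit (qInt q m))
    (hD : ∀ n : ℕ, D (Polynomial.X ^ n) = qInt q n • Polynomial.X ^ (n - 1))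
    (del : Module.End (zs R p) (PS R))
    (hc : ∀ m, PowerSeries.constantCoeff (del m) = D (PowerSeries.constantCoeff m)) :
    IsUnit (Matrix.of fun i j : Fin p =>
      (del ^ (i : ℕ)) (PowerSeries.C (Polynomial.X ^ (j : ℕ)))) := by
  rw [Matrix.isUnit_iff_isUnit_det, PowerSeries.isUnit_iff_constantCoeff, RingHom.map_det]
  have hci : ∀ (i : ℕ) m, PowerSeries.constantCoeff ((del ^ i) m) =
      (D ^ i) (PowerSeries.constantCoeff m) := by
    intro i
    induction i with
    | zero => simp
    | succ i ih => intro m; rw [pow_succ, Module.End.mul_apply, ih, hc, pow_succ,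
        Module.End.mul_apply]
  rw [Matrix.det_of_isUpperTriangular]
  · rw [IsUnit.prod_iff]
    intro j _
    rw [RingHom.mapMatrix_apply, Matrix.map_apply, Matrix.of_apply, hci,
      PowerSeries.constantCoeff_C, D_iterate_self hD]
    refine IsUnit.map Polynomial.C ?_
    rw [IsUnit.prod_iff]
    intro m hm
    rw [Finset.mem_range] at hm
    exact qInt_isUnit q hp hpq hdiv (by omega) (by omega)
  · intro i j hij
    rw [RingHom.mapMatrix_apply, Matrix.map_apply, Matrix.of_apply, hci,
      PowerSeries.constantCoeff_C, D_iterate_of_lt hD i j hij]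

/-- A `ẐD`-linear endomorphism is determined by its values on `1, x, …, x^{p-1}`, and the matrix
`(∂'^i(x^j))` turns the components of `f ∈ D̂` into these values. -/
theorem theta_bijective {p : ℕ} (hp : 0 < p) (del : Module.End (zs R p) (PS R))
    (b : Module.Basis (Fin p) (zs R p) (PS R))
    (hb : ∀ r : Fin p, b r = PowerSeries.C (Polynomial.X ^ (r : ℕ)))
    (hN : IsUnit (Matrix.of fun i j : Fin p =>
      (del ^ (i : ℕ)) (PowerSeries.C (Polynomial.X ^ (j : ℕ))))) :
    Function.Bijective (theta p del) := by
  set N := Matrix.of fun i j : Fin p =>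
      (del ^ (i : ℕ)) (PowerSeries.C (Polynomial.X ^ (j : ℕ)) : PS R) with hNdef
  have key : ∀ f (j : Fin p), theta p del f (b j) =
      Matrix.vecMul (fun i : Fin p => dcoef p i f) N j := by
    intro f j
    rw [theta_apply, Finset.sum_range, hb]
    rfl
  constructor
  · intro f g hfg
    have h1 : Matrix.vecMul (fun i : Fin p => dcoef p i f) N =
        Matrix.vecMul (fun i : Fin p => dcoef p i g) N := by
      funext j
      rw [← key, ← key, hfg]
    have h2 := Matrix.vecMul_injective_of_isUnit hN h1
    exact ext_dcoef hp fun i hi => congrFun h2 ⟨i, hi⟩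
  · intro φ
    obtain ⟨v, hv⟩ := (Matrix.vecMul_surjective_iff_isUnit.mpr hN) fun j => φ (b j)
    refine ⟨asm p fun i => if h : i < p then v ⟨i, h⟩ else 0, b.ext fun j => ?_⟩
    rw [key, ← congrFun hv j]
    congr 1
    funext i
    rw [dcoef_asm i.2, dif_pos i.2]

end Bijective

/-- `theta` is multiplicative on the Ore extension: both sides are determined by the commutation
rule, which `del` satisfies. -/
theorem theta_omul {R : Type*} [CommRing R] {p : ℕ} (hp : 0 < p)
    {σ : Polynomial R →ₐ[R] Polynomial R} {D : Polynomial R →ₗ[R] Polynomial R}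
    {del : Module.End (zs R p) (PS R)}
    (hdelp : ∀ m, (del ^ p) m = PowerSeries.X * m)
    (hdelC : ∀ b m, del (PowerSeries.C b * m) =
        PowerSeries.C (σ b) * del m + PowerSeries.C (D b) * m)
    (omul : (ℕ →₀ Polynomial R) → (ℕ →₀ Polynomial R) → (ℕ →₀ Polynomial R))
    (hadd₁ : ∀ f g h : ℕ →₀ Polynomial R, omul (f + g) h = omul f h + omul g h)
    (hadd₂ : ∀ f g h : ℕ →₀ Polynomial R, omul f (g + h) = omul f g + omul f h)
    (hassoc : ∀ f g h : ℕ →₀ Polynomial R, omul (omul f g) h = omul f (omul g h))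
    (hone₁ : ∀ f : ℕ →₀ Polynomial R, omul (Finsupp.single 0 1) f = f)
    (hsmul : ∀ (a : Polynomial R) (f g : ℕ →₀ Polynomial R), omul (a • f) g = a • omul f g)
    (hpow : ∀ k l : ℕ, omul (Finsupp.single k 1) (Finsupp.single l 1) =
      Finsupp.single (k + l) 1)
    (hcomm : ∀ a : Polynomial R, omul (Finsupp.single 1 1) (Finsupp.single 0 a) =
      Finsupp.single 1 (σ a) + Finsupp.single 0 (D a)) (f g : ℕ →₀ Polynomial R) (m : PS R) :
    theta p del (omul f g) m = theta p del f (theta p del g m) := by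
  have hsing : ∀ (k : ℕ) (a : Polynomial R), Finsupp.single k a = a • Finsupp.single k 1 := by
    intro k a
    rw [Finsupp.smul_single, smul_eq_mul, mul_one]
  have h0 : ∀ l (b : Polynomial R),
      omul (Finsupp.single 0 b) (Finsupp.single l 1) = Finsupp.single l b := by
    intro l b
    rw [hsing 0 b, hsmul, hone₁, ← hsing]
  have hl : ∀ l (b : Polynomial R),
      omul (Finsupp.single l b) (Finsupp.single 1 1) = Finsupp.single (l + 1) b := by
    intro l b
    rw [hsing l b, hsmul, hpow, ← hsing]
  have h1 : ∀ l (b : Polynomial R), omul (Finsupp.single 1 1) (Finsupp.single l b) =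
      Finsupp.single (l + 1) (σ b) + Finsupp.single l (D b) := by
    intro l b
    rw [← h0 l b, ← hassoc, hcomm, hadd₁, h0, hsing 1, hsmul, hpow, ← hsing, add_comm 1 l]
  have hz₁ : ∀ g, omul 0 g = 0 := by
    intro g
    have := hadd₁ 0 0 g
    rw [add_zero] at this
    exact left_eq_add.mp this
  have hz₂ : ∀ f, omul f 0 = 0 := by
    intro f
    have := hadd₂ f 0 0
    rw [add_zero] at this
    exact left_eq_add.mp this
  have hdel1 : ∀ (g : ℕ →₀ Polynomial R) (m : PS R),
      theta p del (omul (Finsupp.single 1 1) g) m = del (theta p del g m) := by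
    intro g m
    induction g using Finsupp.induction_linear with
    | zero => simp [hz₂]
    | add g g' h h' =>
      simp only [hadd₂, Finsupp.coe_add, map_add, LinearMap.add_apply, h, h']
    | single l b =>
      rw [h1, Finsupp.coe_add, map_add, LinearMap.add_apply, theta_single hp hdelp,
        theta_single hp hdelp, theta_single hp hdelp, hdelC, pow_succ', Module.End.mul_apply]
  have hdelk : ∀ (k : ℕ) (g : ℕ →₀ Polynomial R) (m : PS R),
      theta p del (omul (Finsupp.single k 1) g) m = (del ^ k) (theta p del g m) := by
    intro k
    induction k with
    | zero => intro g m; rw [hone₁]; simp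
    | succ k ih =>
      intro g m
      rw [← hl, hassoc, ih, hdel1, pow_succ, Module.End.mul_apply]
  have hsm : ∀ (a : Polynomial R) (f : ℕ →₀ Polynomial R) (m : PS R),
      theta p del (a • f : ℕ →₀ Polynomial R) m = PowerSeries.C a * theta p del f m := by
    intro a f m
    rw [theta_apply, theta_apply, Finset.mul_sum]
    refine Finset.sum_congr rfl fun i _ => ?_
    rw [← mul_assoc]
    congr 1
    ext1 k
    simp [dcoef]
  induction f using Finsupp.induction_linear with
  | zero => simp [hz₁]
  | add f f' h h' => simp only [hadd₁, Finsupp.coe_add, map_add, LinearMap.add_apply, h, h']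
  | single k a =>
    rw [theta_single hp hdelp, hsing, hsmul, hsm, hdelk]

/-- Azumaya splitting of the completed ring of `q`-twisted differential
operators over its center: let `p` be a prime, `R` a nontrivial commutative ring,
`q ∈ R` with `(p)_q = 0` and `R` `q`-divisible; `A = R[x]`, `σ(x) = qx`,
`∂_σ(x^n) = (n)_q x^{n−1}` and `D = D_{A,σ}` the Ore extension (axiomatized below by its
multiplication `omul` on `ℕ →₀ A`).  Then:
(a) the multiplication of `D` extends to the set `D̂ = ℕ → A` of formal series
`Σ_k a_k∂^k`, making `D̂` an `R`-algebra containing `D`;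
(b) `ẐD` is the center of `D̂`, and `ẐA` is a commutative subring of `D̂` which is a free
`ẐD`-module of rank `p` with basis `1, x, …, x^{p−1}`;
(c) there is an isomorphism of `R`-algebras `D̂ ≅ End_{ẐD}(ẐA)` (encoded below by a
faithful action `act` of `D̂` on `ẐA` by `ẐD`-linear endomorphisms, hitting every
`ẐD`-linear endomorphism) under which each central element acts as multiplication by
itself. -/
theorem azumaya_splitting_completed_q_differential_operators
    (p : ℕ) (hp : p.Prime)
    (R : Type*) [CommRing R] [Nontrivial R] (q : R)
    (hpq : qInt q p = 0)
    (hdiv : ∀ m : ℕ, 1 ≤ m → qInt q m ≠ 0 → IsUnit (qInt q m))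
    (σ : Polynomial R →ₐ[R] Polynomial R)
    (hσ : σ Polynomial.X = Polynomial.C q * Polynomial.X)
    (D : Polynomial R →ₗ[R] Polynomial R)
    (hD : ∀ n : ℕ, D (Polynomial.X ^ n) = qInt q n • Polynomial.X ^ (n - 1))
    -- the Ore extension multiplication on `D = ℕ →₀ R[x]`
    (omul : (ℕ →₀ Polynomial R) → (ℕ →₀ Polynomial R) → (ℕ →₀ Polynomial R))
    (hadd₁ : ∀ f g h : ℕ →₀ Polynomial R, omul (f + g) h = omul f h + omul g h)
    (hadd₂ : ∀ f g h : ℕ →₀ Polynomial R, omul f (g + h) = omul f g + omul f h)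
    (hassoc : ∀ f g h : ℕ →₀ Polynomial R, omul (omul f g) h = omul f (omul g h))
    (hone₁ : ∀ f : ℕ →₀ Polynomial R, omul (Finsupp.single 0 1) f = f)
    (hone₂ : ∀ f : ℕ →₀ Polynomial R, omul f (Finsupp.single 0 1) = f)
    (hA : ∀ a b : Polynomial R,
      omul (Finsupp.single 0 a) (Finsupp.single 0 b) = Finsupp.single 0 (a * b))
    (hsmul : ∀ (a : Polynomial R) (f g : ℕ →₀ Polynomial R), omul (a • f) g = a • omul f g)
    (hpow : ∀ k l : ℕ, omul (Finsupp.single k 1) (Finsupp.single l 1) =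
      Finsupp.single (k + l) 1)
    (hcomm : ∀ a : Polynomial R, omul (Finsupp.single 1 1) (Finsupp.single 0 a) =
      Finsupp.single 1 (σ a) + Finsupp.single 0 (D a)) :
    ∃ mul : (ℕ → Polynomial R) → (ℕ → Polynomial R) → (ℕ → Polynomial R),
      -- (a) `D̂` is an `R`-algebra …
      (∀ f g h : ℕ → Polynomial R, mul (f + g) h = mul f h + mul g h) ∧
      (∀ f g h : ℕ → Polynomial R, mul f (g + h) = mul f g + mul f h) ∧
      (∀ (r : R) (f g : ℕ → Polynomial R), mul (r • f) g = r • mul f g) ∧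
      (∀ (r : R) (f g : ℕ → Polynomial R), mul f (r • g) = r • mul f g) ∧
      (∀ f g h : ℕ → Polynomial R, mul (mul f g) h = mul f (mul g h)) ∧
      (∀ f : ℕ → Polynomial R, mul (oneD R) f = f) ∧
      (∀ f : ℕ → Polynomial R, mul f (oneD R) = f) ∧
      -- … containing `D`, i.e. `mul` extends the multiplication of `D`
      (∀ f g : ℕ →₀ Polynomial R, mul (⇑f) (⇑g) = ⇑(omul f g)) ∧
      -- (b) `ẐD` is the center of `D̂` …
      (∀ f : ℕ → Polynomial R,
        (∀ g : ℕ → Polynomial R, mul f g = mul g f) ↔ f ∈ ZDhat R p) ∧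
      -- … `ẐA` is a commutative subring …
      (∀ f g : ℕ → Polynomial R, f ∈ ZAhat R p → g ∈ ZAhat R p → mul f g ∈ ZAhat R p) ∧
      (∀ f g : ℕ → Polynomial R, f ∈ ZAhat R p → g ∈ ZAhat R p → mul f g = mul g f) ∧
      (oneD R ∈ ZAhat R p) ∧
      -- … and a free `ẐD`-module of rank `p` with basis `1, x, …, x^{p−1}`
      (∀ f : ℕ → Polynomial R, f ∈ ZAhat R p →
        ∃! c : Fin p → (ℕ → Polynomial R),
          (∀ r : Fin p, c r ∈ ZDhat R p) ∧
          f = ∑ r : Fin p, mul (c r) (xpowD R (r : ℕ))) ∧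
      -- (c) the `R`-algebra isomorphism `D̂ ≅ End_{ẐD}(ẐA)`
      (∃ act : (ℕ → Polynomial R) → (ℕ → Polynomial R) → (ℕ → Polynomial R),
        (∀ f v, v ∈ ZAhat R p → act f v ∈ ZAhat R p) ∧
        (∀ f g v, act (f + g) v = act f v + act g v) ∧
        (∀ f v w, act f (v + w) = act f v + act f w) ∧
        (∀ (r : R) (f v : ℕ → Polynomial R), act (r • f) v = r • act f v) ∧
        (∀ f g v, act (mul f g) v = act f (act g v)) ∧
        (∀ v, act (oneD R) v = v) ∧
        (∀ z f v, z ∈ ZDhat R p → v ∈ ZAhat R p → act f (mul z v) = mul z (act f v)) ∧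
        -- each central element corresponds to multiplication by itself
        (∀ z v, z ∈ ZDhat R p → v ∈ ZAhat R p → act z v = mul z v) ∧
        -- injectivity
        (∀ f : ℕ → Polynomial R, (∀ v ∈ ZAhat R p, act f v = 0) → f = 0) ∧
        -- surjectivity onto the `ẐD`-linear endomorphisms of `ẐA`
        (∀ φ : (ℕ → Polynomial R) → (ℕ → Polynomial R),
          (∀ v ∈ ZAhat R p, φ v ∈ ZAhat R p) →
          (∀ v w, v ∈ ZAhat R p → w ∈ ZAhat R p → φ (v + w) = φ v + φ w) →
          (∀ z v, z ∈ ZDhat R p → v ∈ ZAhat R p → φ (mul z v) = mul z (φ v)) →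
          ∃ f : ℕ → Polynomial R, ∀ v ∈ ZAhat R p, act f v = φ v)) := by
  have hp0 : 0 < p := hp.pos
  obtain ⟨b, hb⟩ := exists_basis (R := R) hp0
  obtain ⟨del, hdelC, hdelp, hdel0⟩ := exists_del hp hpq hdiv hσ hD (zs_span hp0)
  let Θ : (ℕ → Polynomial R) ≃ₗ[R] Module.End (zs R p) (PS R) :=
    LinearEquiv.ofBijective (theta p del)
      (theta_bijective hp0 del b hb (isUnit_matrix hp hpq hdiv hD del hdel0))
  have hΘ : ∀ f, Θ f = theta p del f := fun f => rfl
  have hΘinc : ∀ a m : PS R, Θ (inc p a) m = a * m := theta_inc hp0 del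
  have hlin : ∀ (E : Module.End (zs R p) (PS R)) (z m : PS R), z ∈ zs R p →
      E (z * m) = z * E m := fun E z m hz => E.map_smul (⟨z, hz⟩ : zs R p) m
  have hZD : ∀ z, z ∈ ZDhat R p → ∃ z' ∈ zs R p, z = inc p z' := by
    intro z hz
    have h1 : inc p (dcoef p 0 z) = z := inc_dcoef hz.1
    exact ⟨_, (inc_mem_ZDhat hp0).mp (h1.symm ▸ hz), h1.symm⟩
  have hZA : ∀ v, v ∈ ZAhat R p → ∃ v', v = inc p v' :=
    fun v hv => ⟨_, (inc_dcoef hv).symm⟩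
  have hinj : Function.Injective (inc p : PS R → _) := by
    intro a a' h
    have := congrArg (dcoef p 0) h
    simpa [dcoef_inc hp0] using this
  have hΘone : Θ (oneD R) = 1 := by
    rw [oneD_eq p]
    ext1 m
    rw [hΘinc, one_mul, Module.End.one_apply]
  let mul : (ℕ → Polynomial R) → (ℕ → Polynomial R) → (ℕ → Polynomial R) :=
    fun f g => Θ.symm (Θ f * Θ g)
  have hmul : ∀ f g, Θ (mul f g) = Θ f * Θ g := fun f g => Θ.apply_symm_apply _
  have hincmul : ∀ a a' : PS R, mul (inc p a) (inc p a') = inc p (a * a') := by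
    intro a a'
    apply Θ.injective
    ext1 m
    rw [hmul, Module.End.mul_apply, hΘinc, hΘinc, hΘinc, mul_assoc]
  -- acting on all of `D̂ = ⊕_{i<p} ẐA ∂^i` componentwise makes the identity act as the identity
  -- also outside `ẐA`
  let act : (ℕ → Polynomial R) → (ℕ → Polynomial R) → (ℕ → Polynomial R) :=
    fun f v => asm p fun i => Θ f (dcoef p i v)
  have hact : ∀ f m, act f (inc p m) = inc p (Θ f m) := by
    intro f m
    refine asm_congr hp0 fun i hi => ?_
    rw [dcoef_inc hi]
    split_ifs <;> simp
  refine ⟨mul, ?_, ?_, ?_, ?_, ?_, ?_, ?_, ?_, ?_, ?_, ?_, ?_, ?_, act, ?_, ?_, ?_, ?_, ?_, ?_,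
    ?_, ?_, ?_, ?_⟩
  · intro f g h
    simp only [mul, map_add, add_mul]
  · intro f g h
    simp only [mul, map_add, mul_add]
  · intro r f g
    apply Θ.injective
    ext1 m
    simp [hmul]
  · intro r f g
    apply Θ.injective
    rw [map_smul, hmul, hmul, map_smul]
    ext1 m
    rw [Module.End.mul_apply, LinearMap.smul_apply, LinearMap.smul_apply, Module.End.mul_apply,
      Algebra.smul_def, Algebra.smul_def, hlin _ _ _ (Subalgebra.algebraMap_mem _ r)]
  · intro f g h
    apply Θ.injective
    rw [hmul, hmul, hmul, hmul, mul_assoc]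
  · intro f
    apply Θ.injective
    rw [hmul, hΘone, one_mul]
  · intro f
    apply Θ.injective
    rw [hmul, hΘone, mul_one]
  · intro f g
    apply Θ.injective
    ext1 m
    rw [hmul, Module.End.mul_apply]
    exact (theta_omul hp0 hdelp hdelC omul hadd₁ hadd₂ hassoc hone₁ hsmul hpow hcomm f g m).symm
  · intro f
    constructor
    · intro hf
      have hE : ∀ E : Module.End (zs R p) (PS R), Θ f * E = E * Θ f := by
        intro E
        have := congrArg Θ (hf (Θ.symm E))
        rwa [hmul, hmul, Θ.apply_symm_apply] at this
      -- commuting with multiplications, `f` acts as multiplication by `a = f·1`; commuting with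
      -- the projection to the component of `1`, it has `a ∈ ẐD`
      have hfm : f = inc p (Θ f 1) := by
        apply Θ.injective
        ext1 m
        have h1 := LinearMap.congr_fun (hE (Θ (inc p m))) 1
        rw [Module.End.mul_apply, Module.End.mul_apply, hΘinc, hΘinc, mul_one] at h1
        rw [hΘinc, h1, mul_comm]
      rw [hfm, inc_mem_ZDhat hp0]
      have hb0 : b ⟨0, hp0⟩ = 1 := by simp [hb]
      have h2 := LinearMap.congr_fun
        (hE ((LinearMap.toSpanSingleton (zs R p) (PS R) 1).comp (b.coord ⟨0, hp0⟩))) 1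
      rw [Module.End.mul_apply, Module.End.mul_apply, LinearMap.comp_apply,
        LinearMap.comp_apply, LinearMap.toSpanSingleton_apply, LinearMap.toSpanSingleton_apply] at h2
      have h3 : b.coord ⟨0, hp0⟩ 1 = 1 := by
        rw [← hb0]
        simp
      rw [h3, one_smul, Subalgebra.smul_def, smul_eq_mul, mul_one] at h2
      rw [h2]
      exact Subtype.property _
    · intro hf g
      obtain ⟨z, hz, rfl⟩ := hZD f hf
      apply Θ.injective
      ext1 m
      rw [hmul, hmul, Module.End.mul_apply, Module.End.mul_apply, hΘinc, hΘinc, hlin _ _ _ hz]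
  · intro f g hf hg
    obtain ⟨a, rfl⟩ := hZA f hf
    obtain ⟨a', rfl⟩ := hZA g hg
    rw [hincmul]
    exact inc_mem _
  · intro f g hf hg
    obtain ⟨a, rfl⟩ := hZA f hf
    obtain ⟨a', rfl⟩ := hZA g hg
    rw [hincmul, hincmul, mul_comm]
  · rw [oneD_eq p]
    exact inc_mem _
  · intro f hf
    obtain ⟨m, rfl⟩ := hZA f hf
    have hsum : ∀ c : Fin p → zs R p,
        ∑ r : Fin p, mul (inc p (c r : PS R)) (xpowD R (r : ℕ)) =
          inc p (∑ r : Fin p, c r • b r) := by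
      intro c
      rw [inc_sum]
      refine Finset.sum_congr rfl fun r _ => ?_
      rw [xpowD_eq p, hincmul, hb, Subalgebra.smul_def, smul_eq_mul]
    refine ⟨fun r => inc p (b.repr m r : PS R), ⟨fun r => (inc_mem_ZDhat hp0).mpr
      (Subtype.property _), ?_⟩, ?_⟩
    · rw [hsum, b.sum_repr]
    · rintro c ⟨hc, hm⟩
      choose c' hc' hcc' using fun r => hZD (c r) (hc r)
      have hm' : inc p m = inc p (∑ r : Fin p, (⟨c' r, hc' r⟩ : zs R p) • b r) := by
        rw [hm, ← hsum]
        exact Finset.sum_congr rfl fun r _ => by rw [hcc' r]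
      funext r
      rw [hinj hm', b.repr_sum_self, hcc' r]
  · intro f v hv
    obtain ⟨m, rfl⟩ := hZA v hv
    rw [hact]
    exact inc_mem _
  · intro f g v
    funext n
    simp [act, asm]
  · intro f v w
    funext n
    have : ∀ i, dcoef p i (v + w) = dcoef p i v + dcoef p i w := fun i => by
      ext1 k
      simp [dcoef]
    simp [act, asm, this]
  · intro r f v
    funext n
    simp [act, asm]
  · intro f g v
    refine asm_congr hp0 fun i hi => ?_
    rw [dcoef_asm hi, hmul, Module.End.mul_apply]
  · intro v
    simp only [act, hΘone, Module.End.one_apply]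
    exact asm_dcoef p v
  · intro z f v hz hv
    obtain ⟨z', hz', rfl⟩ := hZD z hz
    obtain ⟨m, rfl⟩ := hZA v hv
    rw [hincmul, hact, hact, hincmul, hlin _ _ _ hz']
  · intro z v hz hv
    obtain ⟨z', hz', rfl⟩ := hZD z hz
    obtain ⟨m, rfl⟩ := hZA v hv
    rw [hincmul, hact, hΘinc]
  · intro f hf
    apply Θ.injective
    rw [map_zero]
    ext1 m
    have h1 := hf _ (inc_mem m)
    rw [hact] at h1
    have h2 := congrArg (dcoef p 0) h1
    rw [dcoef_inc hp0, if_pos rfl] at h2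
    rw [h2]
    ext1 k
    simp [dcoef]
  · intro φ hφ hadd hlinφ
    let φ' : Module.End (zs R p) (PS R) :=
      { toFun := fun m => dcoef p 0 (φ (inc p m))
        map_add' := by
          intro m m'
          rw [inc_add, hadd _ _ (inc_mem m) (inc_mem m')]
          ext1 k
          simp [dcoef]
        map_smul' := by
          rintro ⟨z, hz⟩ m
          change dcoef p 0 (φ (inc p (z * m))) = z * dcoef p 0 (φ (inc p m))
          rw [← hincmul, hlinφ _ _ ((inc_mem_ZDhat hp0).mpr hz) (inc_mem m)]
          obtain ⟨w, hw⟩ := hZA _ (hφ _ (inc_mem m))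
          rw [hw, hincmul, dcoef_inc hp0, dcoef_inc hp0, if_pos rfl, if_pos rfl] }
    refine ⟨Θ.symm φ', fun v hv => ?_⟩
    obtain ⟨m, rfl⟩ := hZA v hv
    rw [hact, Θ.apply_symm_apply]
    exact inc_dcoef (hφ _ (inc_mem m))
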